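/- Let a > 0 and set φ(x;a) := e^{−a x²}, φ₁(x;a) := |x|·e^{−a x²}, M₁(a) := a · sup_{x∈ℝ} (2|x|+1)·e^{−(a/2)(x² − 4|x| − 2)}, and M₄(a) := 1 + M₁(a) · max_{x∈ℝ} (|x|+1)·e^{−(a/4)x²} (all finite). Then for all real x, y with |y − x| ≤ 1, one has |φ₁(y;a) − φ₁(x;a)| ≤ M₄(a) · |y−x| · φ(x; a/4). -/

import Mathlib

/-!
Write `φ₁(y) - φ₁(x) = (|y| - |x|) φ(x;a) + |y| (φ(y;a) - φ(x;a))`. The first term is at most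
`|y - x| φ(x;a/4)`. For the second, convexity of `exp` and `min(x², y²) ≥ x² - 2|x| - 1` give
`|φ(y;a) - φ(x;a)| ≤ M₁(a) |y - x| φ(x;a/2)`; then `|y| ≤ |x| + 1` and
`φ(x;a/2) = φ(x;a/4)²` let one factor `φ(x;a/4)` be absorbed in the supremum in `M₄(a)`.
Both suprema are of sets bounded above, since `b s + 1 ≤ exp (b s)` turns the functions into
exponentials of concave quadratics.
-/

/-- `φ(x;a) := exp(−a x²)`. -/
noncomputable def gaussPhi (x a : ℝ) : ℝ := Real.exp (-a * x ^ 2)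

/-- `φ₁(x;a) := |x|·exp(−a x²)`. -/
noncomputable def gaussPhi1 (x a : ℝ) : ℝ := |x| * Real.exp (-a * x ^ 2)

/-- `M₁(a) := a · sup_{x∈ℝ} (2|x|+1)·exp(−(a/2)(x² − 4|x| − 2))`. -/
noncomputable def gaussM1 (a : ℝ) : ℝ :=
  a * ⨆ t : ℝ, (2 * |t| + 1) * Real.exp (-(a / 2) * (t ^ 2 - 4 * |t| - 2))

/-- `M₄(a) := 1 + M₁(a)·max_{x∈ℝ} (|x|+1)·exp(−(a/4)x²)`. -/
noncomputable def gaussM4 (a : ℝ) : ℝ :=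
  1 + gaussM1 a * ⨆ t : ℝ, (|t| + 1) * Real.exp (-(a / 4) * t ^ 2)

/-- Covers both suprema, in `gaussM1` and in `gaussM4`, so that neither takes its junk value. -/
lemma bddAbove_linear_mul_gauss (b c k m : ℝ) (hc : 0 < c) :
    BddAbove (Set.range fun t : ℝ => (b * |t| + 1) * Real.exp (-c * (t ^ 2 - k * |t| - m))) := by
  -- The exponent below is `c * m` plus the maximum over `s` of `(b + c * k) * s - c * s ^ 2`.
  refine ⟨Real.exp (c * m + (b + c * k) ^ 2 / (4 * c)), ?_⟩
  rintro _ ⟨t, rfl⟩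
  refine (mul_le_mul_of_nonneg_right (Real.add_one_le_exp (b * |t|)) (Real.exp_pos _).le).trans ?_
  rw [← Real.exp_add, Real.exp_le_exp, ← sq_abs t]
  have key : c * m + (b + c * k) ^ 2 / (4 * c)
      - (b * |t| + -c * (|t| ^ 2 - k * |t| - m)) = (2 * c * |t| - (b + c * k)) ^ 2 / (4 * c) := by
    field_simp
    ring
  have : 0 ≤ (2 * c * |t| - (b + c * k)) ^ 2 / (4 * c) := by positivity
  linarith

lemma abs_exp_sub_exp_le {u v w : ℝ} (hu : u ≤ w) (hv : v ≤ w) :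
    |Real.exp u - Real.exp v| ≤ |u - v| * Real.exp w := by
  have aux : ∀ p q : ℝ, p ≤ w → Real.exp p - Real.exp q ≤ |p - q| * Real.exp w := by
    intro p q hp
    have h1 : Real.exp q = Real.exp p * Real.exp (q - p) := by
      rw [← Real.exp_add]
      congr 1
      ring
    calc Real.exp p - Real.exp q ≤ (p - q) * Real.exp p := by
          rw [h1]
          nlinarith [Real.add_one_le_exp (q - p), Real.exp_pos p]
      _ ≤ |p - q| * Real.exp w := by
          gcongr
          exact le_abs_self _
  rw [abs_le]
  have := aux v u hv
  rw [abs_sub_comm v u] at this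
  exact ⟨by linarith, aux u v hu⟩

lemma gaussM1_nonneg {a : ℝ} (ha : 0 < a) : 0 ≤ gaussM1 a :=
  mul_nonneg ha.le (Real.iSup_nonneg fun t => by positivity)

lemma abs_gaussPhi_sub_le {a : ℝ} (ha : 0 < a) {x y : ℝ} (h : |y - x| ≤ 1) :
    |gaussPhi y a - gaussPhi x a| ≤ gaussM1 a * |y - x| * gaussPhi x (a / 2) := by
  have hy : x ^ 2 - 2 * |x| - 1 ≤ y ^ 2 := by
    have h1 : |x * (y - x)| ≤ |x| := by
      rw [abs_mul]
      exact mul_le_of_le_one_right (abs_nonneg x) h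
    nlinarith [neg_abs_le (x * (y - x)), sq_nonneg (y - x)]
  have hx : x ^ 2 - 2 * |x| - 1 ≤ x ^ 2 := by linarith [abs_nonneg x]
  have hd : |(-a * y ^ 2) - (-a * x ^ 2)| ≤ a * |y - x| * (2 * |x| + 1) := by
    have e : (-a * y ^ 2) - (-a * x ^ 2) = -(a * (y - x) * (y - x + 2 * x)) := by ring
    have h2 : |y - x + 2 * x| ≤ 2 * |x| + 1 := by
      have := abs_add_le (y - x) (2 * x)
      rw [abs_mul, abs_two] at this
      linarith
    rw [e, abs_neg, abs_mul, abs_mul, abs_of_pos ha]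
    gcongr
  have hs : (2 * |x| + 1) * Real.exp (-(a / 2) * (x ^ 2 - 4 * |x| - 2)) ≤
      ⨆ t : ℝ, (2 * |t| + 1) * Real.exp (-(a / 2) * (t ^ 2 - 4 * |t| - 2)) :=
    le_ciSup (bddAbove_linear_mul_gauss 2 (a / 2) 4 2 (by positivity)) x
  have hsplit : Real.exp (-a * (x ^ 2 - 2 * |x| - 1)) =
      Real.exp (-(a / 2) * (x ^ 2 - 4 * |x| - 2)) * Real.exp (-(a / 2) * x ^ 2) := by
    rw [← Real.exp_add]
    congr 1
    ring
  unfold gaussPhi gaussM1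
  calc |Real.exp (-a * y ^ 2) - Real.exp (-a * x ^ 2)|
      ≤ |(-a * y ^ 2) - (-a * x ^ 2)| * Real.exp (-a * (x ^ 2 - 2 * |x| - 1)) :=
        abs_exp_sub_exp_le (by nlinarith) (by nlinarith)
    _ ≤ a * |y - x| * (2 * |x| + 1) * Real.exp (-a * (x ^ 2 - 2 * |x| - 1)) := by gcongr
    _ = a * ((2 * |x| + 1) * Real.exp (-(a / 2) * (x ^ 2 - 4 * |x| - 2))) * |y - x|
          * Real.exp (-(a / 2) * x ^ 2) := by
        rw [hsplit]
        ring
    _ ≤ _ := by gcongr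

/-- For `a > 0` and all real `x, y` with `|y − x| ≤ 1`,
`|φ₁(y;a) − φ₁(x;a)| ≤ M₄(a)·|y−x|·φ(x;a/4)`. -/
theorem gaussPhi1_lipschitz (a : ℝ) (ha : 0 < a) (x y : ℝ) (h : |y - x| ≤ 1) :
    |gaussPhi1 y a - gaussPhi1 x a| ≤ gaussM4 a * |y - x| * gaussPhi x (a / 4) := by
  have hM := gaussM1_nonneg ha
  have hpos : ∀ b, 0 < gaussPhi x b := fun b => Real.exp_pos _
  have hphi : gaussPhi x a ≤ gaussPhi x (a / 4) :=
    Real.exp_le_exp.2 (by nlinarith [mul_nonneg ha.le (sq_nonneg x)])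
  have hsq : gaussPhi x (a / 2) = gaussPhi x (a / 4) * gaussPhi x (a / 4) := by
    unfold gaussPhi
    rw [← Real.exp_add]
    congr 1
    ring
  have hs : (|x| + 1) * gaussPhi x (a / 4) ≤
      ⨆ t : ℝ, (|t| + 1) * Real.exp (-(a / 4) * t ^ 2) := by
    have hb := bddAbove_linear_mul_gauss 1 (a / 4) 0 0 (by positivity)
    simp only [one_mul, zero_mul, sub_zero] at hb
    exact le_ciSup hb x
  have hyx : |y| ≤ |x| + 1 := by linarith [abs_sub_abs_le_abs_sub y x]
  have e : gaussPhi1 y a - gaussPhi1 x a =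
      (|y| - |x|) * gaussPhi x a + |y| * (gaussPhi y a - gaussPhi x a) := by
    unfold gaussPhi1 gaussPhi
    ring
  calc |gaussPhi1 y a - gaussPhi1 x a|
      ≤ |(|y| - |x|)| * gaussPhi x a + |y| * |gaussPhi y a - gaussPhi x a| := by
        rw [e]
        refine (abs_add_le _ _).trans_eq ?_
        rw [abs_mul, abs_mul, abs_abs, abs_of_pos (hpos a)]
    _ ≤ |y - x| * gaussPhi x (a / 4)
          + (|x| + 1) * (gaussM1 a * |y - x| * gaussPhi x (a / 2)) := by
        have h0 := (hpos a).le
        have h1 := abs_gaussPhi_sub_le ha h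
        have h2 := abs_abs_sub_abs_le y x
        gcongr
    _ = (1 + gaussM1 a * ((|x| + 1) * gaussPhi x (a / 4))) * |y - x| * gaussPhi x (a / 4) := by
        rw [hsq]
        ring
    _ ≤ gaussM4 a * |y - x| * gaussPhi x (a / 4) := by
        have h0 := (hpos (a / 4)).le
        unfold gaussM4
        gcongr
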